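/- arXiv:2210.08895 — 6 statements merged into one kernel-verified Lean document; each statement's English description precedes it below -/
import Mathlib

section
/- Let p : (0,∞) → ℝ be twice differentiable with 0 < p'(ρ) and p''(ρ) > 0, and assume ρ + p(ρ) > 0 for all ρ. Let h : (0,∞) → (0,∞) be differentiable and satisfy h'(ρ) = p'(ρ)h(ρ)/(ρ + p(ρ)) (the isentropic form of the second law of thermodynamics for h = i/n). Let J ⊆ (0,1) be an open interval, let ρ : J → (0,∞) be differentiable, and assume Bernoulli's law: h(ρ(q))/√(1−q²) = C is constant on J. Define a(q) = √(p'(ρ(q))). Then a is differentiable on J and a'(q) = −(ρ(q)+p(ρ(q)))·q·p''(ρ(q)) / (2(1−q²)·a(q)³), which is strictly negative; that is, da/dq = −(i q γ² p''(ρ))/(2a³) < 0. -/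
/-!
Differentiating Bernoulli's law in the form `h (ρ s) = C √(1 - s²)` and eliminating `C` gives
`p' h / (ρ + p) * ρ' = -h q / (1 - q²)`; since `h > 0`, this determines
`ρ' = -(ρ + p) q / ((1 - q²) p')`. The chain rule for `√(p' ∘ ρ)` then yields
`a' = p'' ρ' / (2 a)`, which is the claimed expression because `p' = a²`. Its sign is clear
from `0 < q < 1` and the positivity of `ρ + p`, `p'` and `p''`.
-/

/-- for a convex equation of state `p = p(ρ)` with `p' > 0`, `p'' > 0`,
`ρ + p(ρ) > 0`, enthalpy-per-particle `h` satisfying `h' = p' h/(ρ+p)`, and Bernoulli's law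
`h(ρ(q))/√(1-q²) = C` on an open interval `J ⊆ (0,1)`, the sound speed `a(q) = √(p'(ρ(q)))`
is differentiable with `a'(q) = -(ρ+p) q p''/(2(1-q²)a³) < 0`. -/
theorem stmt_2 (p pd pdd : ℝ → ℝ)
    (hp : ∀ ρ > (0:ℝ), HasDerivAt p (pd ρ) ρ)
    (hpd : ∀ ρ > (0:ℝ), HasDerivAt pd (pdd ρ) ρ)
    (hpdpos : ∀ ρ > (0:ℝ), 0 < pd ρ)
    (hpddpos : ∀ ρ > (0:ℝ), 0 < pdd ρ)
    (hipos : ∀ ρ > (0:ℝ), 0 < ρ + p ρ)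
    (h : ℝ → ℝ)
    (hhpos : ∀ ρ > (0:ℝ), 0 < h ρ)
    (hh : ∀ ρ > (0:ℝ), HasDerivAt h (pd ρ * h ρ / (ρ + p ρ)) ρ)
    (q₁ q₂ : ℝ) (J : Set ℝ) (hJ : J = Set.Ioo q₁ q₂) (hJsub : J ⊆ Set.Ioo 0 1)
    (ρf : ℝ → ℝ) (hρpos : ∀ q ∈ J, 0 < ρf q)
    (hρdiff : ∀ q ∈ J, DifferentiableAt ℝ ρf q)
    (C : ℝ) (hBern : ∀ q ∈ J, h (ρf q) / Real.sqrt (1 - q ^ 2) = C) :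
    ∀ q ∈ J,
      HasDerivAt (fun s => Real.sqrt (pd (ρf s)))
        (-((ρf q + p (ρf q)) * q * pdd (ρf q)) /
          (2 * (1 - q ^ 2) * Real.sqrt (pd (ρf q)) ^ 3)) q ∧
      -((ρf q + p (ρf q)) * q * pdd (ρf q)) /
          (2 * (1 - q ^ 2) * Real.sqrt (pd (ρf q)) ^ 3) < 0 := by
  intro q hq
  obtain ⟨hq0, hq1⟩ := hJsub hq
  have hJn : J ∈ nhds q := by
    rw [hJ] at hq ⊢
    exact isOpen_Ioo.mem_nhds hq
  have hr := hρpos q hq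
  have hi := hipos _ hr
  have hpd0 := hpdpos _ hr
  have hpdd0 := hpddpos _ hr
  have hh0 := hhpos _ hr
  have hw : 0 < 1 - q ^ 2 := by nlinarith
  have hsw : 0 < Real.sqrt (1 - q ^ 2) := Real.sqrt_pos.2 hw
  have hsw2 : Real.sqrt (1 - q ^ 2) ^ 2 = 1 - q ^ 2 := Real.sq_sqrt hw.le
  have ha : 0 < Real.sqrt (pd (ρf q)) := Real.sqrt_pos.2 hpd0
  have ha2 : Real.sqrt (pd (ρf q)) ^ 2 = pd (ρf q) := Real.sq_sqrt hpd0.le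
  have hρ := (hρdiff q hq).hasDerivAt
  have hL := (hh _ hr).comp q hρ
  have hR : HasDerivAt (fun s : ℝ => C * Real.sqrt (1 - s ^ 2))
      (C * (-(2 * q) / (2 * Real.sqrt (1 - q ^ 2)))) q := by
    have h1 : HasDerivAt (fun s : ℝ => 1 - s ^ 2) (-(2 * q)) q := by
      simpa using (hasDerivAt_pow 2 q).const_sub 1
    exact (h1.sqrt hw.ne').const_mul C
  have hEv : (h ∘ ρf) =ᶠ[nhds q] fun s : ℝ => C * Real.sqrt (1 - s ^ 2) := by
    filter_upwards [hJn] with s hs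
    obtain ⟨hs0, hs1⟩ := hJsub hs
    have : 0 < Real.sqrt (1 - s ^ 2) := Real.sqrt_pos.2 (by nlinarith)
    exact (div_eq_iff this.ne').1 (hBern s hs)
  have hU := hL.unique (hR.congr_of_eventuallyEq hEv)
  have hρ' : deriv ρf q = -((ρf q + p (ρf q)) * q) / ((1 - q ^ 2) * pd (ρf q)) := by
    have hC : C * (-(2 * q) / (2 * Real.sqrt (1 - q ^ 2)))
        = -(h (ρf q) * q) / (1 - q ^ 2) := by
      rw [← hBern q hq]
      conv_rhs => rw [← hsw2]
      field_simp
    rw [hC, div_mul_eq_mul_div, div_eq_div_iff hi.ne' hw.ne'] at hU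
    rw [eq_div_iff (by positivity)]
    apply mul_left_cancel₀ hh0.ne'
    linear_combination hU
  constructor
  · have hA := ((hpd _ hr).comp q hρ).sqrt hpd0.ne'
    refine hA.congr_deriv ?_
    simp only [Function.comp_apply]
    rw [hρ', pow_succ (Real.sqrt _) 2, ha2]
    field_simp
  · rw [neg_div]
    exact neg_neg_of_pos (by positivity)
end

section
/- Let U ⊆ ℝ² be open, let φ, ϖ : U → ℝ be continuously differentiable, and let c : [0,1] → U be a continuously differentiable curve with c'(s) ≠ 0 for all s ∈ [0,1], along which ϖ is constant (ϖ(c(s)) = ϖ(c(0)) for all s) and ∇ϖ(c(s)) ≠ 0 for all s. If (∂_x φ · ∂_r ϖ − ∂_r φ · ∂_x ϖ)(c(s)) > 0 for every s ∈ [0,1], then the function s ↦ φ(c(s)) is strictly monotone on [0,1]. In particular, φ takes distinct values at distinct points of the level curve, so two distinct points on the same level set of ϖ traversed by c cannot have equal values of both ϖ and φ. -/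
/-!
Along the level curve, `c'` is annihilated by the derivative of `ϖ`. Positivity of the Jacobian of
`(φ, ϖ)` makes the two differentials linearly independent, so the nonzero vector `c'` is not
annihilated by the derivative of `φ`. Hence the derivative of `φ ∘ c` never vanishes on `[0, 1]`; by
Darboux's theorem it has constant sign, and `φ ∘ c` is strictly monotone, hence injective.
-/

/-- Two linear forms on the plane with nonzero determinant have no common nonzero kernel vector. -/
lemma eq_zero_of_det_pos (A B : ℝ × ℝ →L[ℝ] ℝ)
    (h : 0 < A (1, 0) * B (0, 1) - A (0, 1) * B (1, 0))
    (v : ℝ × ℝ) (hA : A v = 0) (hB : B v = 0) : v = 0 := by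
  obtain ⟨a, b⟩ := v
  have key (L : ℝ × ℝ →L[ℝ] ℝ) : L (a, b) = a * L (1, 0) + b * L (0, 1) := by
    have : ((a, b) : ℝ × ℝ) = a • ((1, 0) : ℝ × ℝ) + b • ((0, 1) : ℝ × ℝ) := by simp
    rw [this, map_add, map_smul, map_smul, smul_eq_mul, smul_eq_mul]
  rw [key] at hA hB
  -- Cramer's rule
  have ha : a * (A (1, 0) * B (0, 1) - A (0, 1) * B (1, 0)) = 0 := by
    linear_combination B (0, 1) * hA - A (0, 1) * hB
  have hb : b * (A (1, 0) * B (0, 1) - A (0, 1) * B (1, 0)) = 0 := by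
    linear_combination A (1, 0) * hB - B (1, 0) * hA
  have ha' := (mul_eq_zero.mp ha).resolve_right h.ne'
  have hb' := (mul_eq_zero.mp hb).resolve_right h.ne'
  rw [ha', hb', Prod.mk_zero_zero]

/-- along a regular C¹ level curve of `ϖ` on which `∇ϖ ≠ 0`, if
`φ_x ϖ_r - φ_r ϖ_x > 0` everywhere on the curve then `φ` is strictly monotone along the
curve; in particular `φ` takes distinct values at distinct parameters, so two distinct
points on the same level set of `ϖ` traversed by the curve cannot share both values. -/
theorem stmt_13 (U : Set (ℝ × ℝ)) (hU : IsOpen U)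
    (φ ϖ : ℝ × ℝ → ℝ) (hφ : ContDiffOn ℝ 1 φ U) (hϖ : ContDiffOn ℝ 1 ϖ U)
    (c : ℝ → ℝ × ℝ) (c' : ℝ → ℝ × ℝ)
    (hcU : ∀ s ∈ Set.Icc (0:ℝ) 1, c s ∈ U)
    (hc : ∀ s ∈ Set.Icc (0:ℝ) 1, HasDerivAt c (c' s) s)
    (hc'cont : ContinuousOn c' (Set.Icc 0 1))
    (hc'ne : ∀ s ∈ Set.Icc (0:ℝ) 1, c' s ≠ 0)
    (hlevel : ∀ s ∈ Set.Icc (0:ℝ) 1, ϖ (c s) = ϖ (c 0))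
    (hgrad : ∀ s ∈ Set.Icc (0:ℝ) 1, fderiv ℝ ϖ (c s) ≠ 0)
    (hpos : ∀ s ∈ Set.Icc (0:ℝ) 1,
      0 < fderiv ℝ φ (c s) (1, 0) * fderiv ℝ ϖ (c s) (0, 1)
          - fderiv ℝ φ (c s) (0, 1) * fderiv ℝ ϖ (c s) (1, 0)) :
    (StrictMonoOn (fun s => φ (c s)) (Set.Icc 0 1) ∨
     StrictAntiOn (fun s => φ (c s)) (Set.Icc 0 1)) ∧
    ∀ s₁ ∈ Set.Icc (0:ℝ) 1, ∀ s₂ ∈ Set.Icc (0:ℝ) 1, s₁ ≠ s₂ →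
      φ (c s₁) ≠ φ (c s₂) := by
  have chain (g : ℝ × ℝ → ℝ) (hg : ContDiffOn ℝ 1 g U) (s : ℝ) (hs : s ∈ Set.Icc (0:ℝ) 1) :
      HasDerivAt (fun s => g (c s)) (fderiv ℝ g (c s) (c' s)) s :=
    (((hg.contDiffAt (hU.mem_nhds (hcU s hs))).differentiableAt
      one_ne_zero).hasFDerivAt).comp_hasDerivAt s (hc s hs)
  -- The level condition holds only on `[0, 1]`, so the two derivatives of `ϖ ∘ c` are compared
  -- within that interval, which also covers the endpoints.
  have tangent (s : ℝ) (hs : s ∈ Set.Icc (0:ℝ) 1) : fderiv ℝ ϖ (c s) (c' s) = 0 :=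
    (uniqueDiffOn_Icc zero_lt_one s hs).eq_deriv _ (chain ϖ hϖ s hs).hasDerivWithinAt
      ((hasDerivWithinAt_const s _ (ϖ (c 0))).congr hlevel (hlevel s hs))
  have hne (s : ℝ) (hs : s ∈ Set.Icc (0:ℝ) 1) : fderiv ℝ φ (c s) (c' s) ≠ 0 := fun h =>
    hc'ne s hs (eq_zero_of_det_pos _ _ (hpos s hs) _ h (tangent s hs))
  have hcont : ContinuousOn (fun s => φ (c s)) (Set.Icc 0 1) := fun s hs =>
    (chain φ hφ s hs).continuousAt.continuousWithinAt
  have hmono : StrictMonoOn (fun s => φ (c s)) (Set.Icc 0 1) ∨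
      StrictAntiOn (fun s => φ (c s)) (Set.Icc 0 1) := by
    rcases hasDerivWithinAt_forall_lt_or_forall_gt_of_forall_ne (convex_Icc (0:ℝ) 1)
      (fun s hs => (chain φ hφ s hs).hasDerivWithinAt) hne with h | h
    · exact .inr (strictAntiOn_of_hasDerivWithinAt_neg (convex_Icc 0 1) hcont
        (fun s hs => (chain φ hφ s (interior_subset hs)).hasDerivWithinAt)
        (fun s hs => h s (interior_subset hs)))
    · exact .inl (strictMonoOn_of_hasDerivWithinAt_pos (convex_Icc 0 1) hcont
        (fun s hs => (chain φ hφ s (interior_subset hs)).hasDerivWithinAt)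
        (fun s hs => h s (interior_subset hs)))
  refine ⟨hmono, fun s₁ h₁ s₂ h₂ hs heq => hs ?_⟩
  exact hmono.elim (fun h => h.injOn h₁ h₂ heq) (fun h => h.injOn h₁ h₂ heq)
end

section
/- Let θ ∈ ℝ and ω ∈ (0, π/2), set t = cos ω, and let W, Z, L ∈ ℝ satisfy W − Z = 2tL, W + Z ≠ 0 and cos(θ − ω) ≠ 0. Then (−2√(1−t²)·Z·cos θ + t(W+Z)·sin θ − 2√(1−t²)·cos θ·L·t) / (2√(1−t²)·Z·sin θ + t(W+Z)·cos θ + 2√(1−t²)·sin θ·L·t) = tan(θ − ω). (Hence, under the inverse of the partial hodograph transformation, a positive characteristic curve in the (t,ψ)-plane is mapped to a curve in the (x,r)-plane with slope dr/dx = sin β/cos β = Λ₋, i.e. a negative characteristic.) -/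
/-- with `t = cos ω`, `ω ∈ (0, π/2)`, `W - Z = 2tL`, `W + Z ≠ 0` and
`cos(θ - ω) ≠ 0`, the slope quotient of the image of a positive characteristic under the
inverse partial hodograph map equals `tan(θ - ω)`, i.e. it is a negative characteristic. -/
theorem stmt_14 (θ ω : ℝ) (hω : ω ∈ Set.Ioo 0 (Real.pi / 2))
    (W Z L t : ℝ) (ht : t = Real.cos ω)
    (hWZ : W - Z = 2 * t * L) (hsum : W + Z ≠ 0) (hcos : Real.cos (θ - ω) ≠ 0) :
    (-2 * Real.sqrt (1 - t ^ 2) * Z * Real.cos θ + t * (W + Z) * Real.sin θ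
        - 2 * Real.sqrt (1 - t ^ 2) * Real.cos θ * L * t) /
      (2 * Real.sqrt (1 - t ^ 2) * Z * Real.sin θ + t * (W + Z) * Real.cos θ
        + 2 * Real.sqrt (1 - t ^ 2) * Real.sin θ * L * t)
      = Real.tan (θ - ω) := by
  have hs : Real.sqrt (1 - t ^ 2) = Real.sin ω := by
    rw [ht, ← Real.sin_eq_sqrt_one_sub_cos_sq hω.1.le (by linarith [hω.2, Real.pi_pos])]
  -- Since `2Z + 2tL = W + Z`, the factor `W + Z` comes out of numerator and denominator,
  -- leaving `sin (θ - ω)` and `cos (θ - ω)` by the subtraction formulas.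
  have hnum : -2 * Real.sqrt (1 - t ^ 2) * Z * Real.cos θ + t * (W + Z) * Real.sin θ
      - 2 * Real.sqrt (1 - t ^ 2) * Real.cos θ * L * t = (W + Z) * Real.sin (θ - ω) := by
    rw [hs, Real.sin_sub, ← ht]
    linear_combination Real.sin ω * Real.cos θ * hWZ
  have hden : 2 * Real.sqrt (1 - t ^ 2) * Z * Real.sin θ + t * (W + Z) * Real.cos θ
      + 2 * Real.sqrt (1 - t ^ 2) * Real.sin θ * L * t = (W + Z) * Real.cos (θ - ω) := by
    rw [hs, Real.cos_sub, ← ht]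
    linear_combination -Real.sin ω * Real.sin θ * hWZ
  rw [hnum, hden, mul_div_mul_left _ _ hsum, Real.tan_eq_sin_div_cos]
end

section
/- Let r > 0, a > 0, F₁ > 0, θ ∈ ℝ, ω ∈ (0, π/2), and W, Z, L ∈ ℝ with W − Z = 2 cos ω · L. Set α = θ + ω and define θ_x = (cos ω sin θ (W−Z) − sin ω cos θ (W+Z) + sin²θ)/r, θ_r = (cos ω cos θ (Z−W) − sin ω sin θ (W+Z) − sin θ cos θ)/r, ϖ_x = −(F₁/(4a²r))·((W+Z) sin θ − 2 sin ω cos θ L), ϖ_r = (F₁/(4a²r))·((W+Z) cos θ + 2 sin ω sin θ L). Then r(cos α · θ_x + sin α · θ_r) + (4a² cos ω / F₁) · r(cos α · ϖ_x + sin α · ϖ_r) = −sin ω · sin θ. (That is, the functions (θ, ϖ) constructed from a solution in the partial hodograph plane satisfy the first characteristic equation ∂̃₊θ + (4a² cos ω/F₁)·∂̃₊ϖ = −ϖ sin θ of the physical-plane system.) -/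
/-!
Taking the derivative along the direction `α = θ + ω` pairs each gradient with
`(cos α, sin α)`, so only the two projections `cos α cos θ + sin α sin θ = cos (α - θ) = cos ω` and
`sin α cos θ - cos α sin θ = sin (α - θ) = sin ω` enter. They give
`∂̃₊θ = -sin ω cos ω (W - Z) - sin ω cos ω (W + Z) - sin ω sin θ` and
`(4a² cos ω / F₁) ∂̃₊ϖ = sin ω cos ω (W + Z) + 2 sin ω cos² ω L`.
In the sum the `W + Z` terms cancel, and the relation `W - Z = 2 cos ω · L` cancels the rest.
-/

/-- the functions `(θ, ϖ)` constructed from a solution in the partial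
hodograph plane, with gradients given by formulas (5.105) and `W - Z = 2 cos ω · L`,
satisfy the first characteristic equation
`∂̃₊θ + (4a² cos ω/F₁)·∂̃₊ϖ = -ϖ sin θ` of the physical-plane system, where `α = θ + ω`. -/
theorem stmt_15 (r a F₁ θ ω : ℝ) (hr : 0 < r) (ha : 0 < a) (hF₁ : 0 < F₁)
    (hω : ω ∈ Set.Ioo 0 (Real.pi / 2))
    (W Z L : ℝ) (hWZ : W - Z = 2 * Real.cos ω * L)
    (α θx θr ϖx ϖr : ℝ) (hα : α = θ + ω)
    (hθx : θx = (Real.cos ω * Real.sin θ * (W - Z) - Real.sin ω * Real.cos θ * (W + Z)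
      + Real.sin θ ^ 2) / r)
    (hθr : θr = (Real.cos ω * Real.cos θ * (Z - W) - Real.sin ω * Real.sin θ * (W + Z)
      - Real.sin θ * Real.cos θ) / r)
    (hϖx : ϖx = -(F₁ / (4 * a ^ 2 * r)) *
      ((W + Z) * Real.sin θ - 2 * Real.sin ω * Real.cos θ * L))
    (hϖr : ϖr = F₁ / (4 * a ^ 2 * r) *
      ((W + Z) * Real.cos θ + 2 * Real.sin ω * Real.sin θ * L)) :
    r * (Real.cos α * θx + Real.sin α * θr)
      + 4 * a ^ 2 * Real.cos ω / F₁ * (r * (Real.cos α * ϖx + Real.sin α * ϖr))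
      = -(Real.sin ω * Real.sin θ) := by
  have hcos : Real.cos α * Real.cos θ + Real.sin α * Real.sin θ = Real.cos ω := by
    rw [← Real.cos_sub, hα, add_sub_cancel_left]
  have hsin : Real.sin α * Real.cos θ - Real.cos α * Real.sin θ = Real.sin ω := by
    rw [← Real.sin_sub, hα, add_sub_cancel_left]
  have hθ : r * (Real.cos α * θx + Real.sin α * θr)
      = -(Real.sin ω * Real.cos ω * (W - Z)) - Real.sin ω * Real.cos ω * (W + Z)
        - Real.sin ω * Real.sin θ := by
    rw [hθx, hθr]
    field_simp
    linear_combination (-(Real.cos ω * (W - Z)) - Real.sin θ) * hsin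
      - Real.sin ω * (W + Z) * hcos
  have hϖ : 4 * a ^ 2 * Real.cos ω / F₁ * (r * (Real.cos α * ϖx + Real.sin α * ϖr))
      = Real.sin ω * Real.cos ω * (W + Z) + 2 * Real.sin ω * Real.cos ω ^ 2 * L := by
    rw [hϖx, hϖr]
    have hcancel : 4 * a ^ 2 / F₁ * (r * (F₁ / (4 * a ^ 2 * r))) = 1 := by
      field_simp
    linear_combination Real.cos ω * ((W + Z) * (Real.sin α * Real.cos θ - Real.cos α * Real.sin θ)
        + 2 * Real.sin ω * L * (Real.cos α * Real.cos θ + Real.sin α * Real.sin θ)) * hcancel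
      + Real.cos ω * (W + Z) * hsin + 2 * Real.cos ω * Real.sin ω * L * hcos
  rw [hθ, hϖ]
  linear_combination -(Real.sin ω * Real.cos ω) * hWZ
end

section
/- Let t ∈ (0,1), r > 0, γ > 0, a > 0, γ_a > 0, F > 0, θ ∈ ℝ and W, Z, L ∈ ℝ with W + Z ≠ 0. Define x_t = t√(1−t²)·r·sin θ/(F(W+Z)), r_t = −t√(1−t²)·r·cos θ/(F(W+Z)), x_ψ = (√(1−t²)·γ/(aγ_a(W+Z)))·((W+Z) cos θ + 2√(1−t²) sin θ·L), r_ψ = (√(1−t²)·γ/(aγ_a(W+Z)))·((W+Z) sin θ − 2√(1−t²) cos θ·L). Then the Jacobian determinant satisfies x_t·r_ψ − x_ψ·r_t = t(1−t²)·r·γ/(a·γ_a·F·(W+Z)). In particular it is nonzero whenever t > 0, r > 0 and W + Z ≠ 0, so the inverse map (t,ψ) ↦ (x,r) is a local diffeomorphism away from the degenerate line t = 0. -/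
/-! Expanding the determinant, the two terms containing `L` are
`∓ 2 √(1 - t²) sin θ cos θ L` and cancel, while the remaining two carry `(W + Z) sin² θ` and
`(W + Z) cos² θ`. The Pythagorean identity and `√(1 - t²)² = 1 - t²` then give the closed form,
whose factors are all nonzero. -/

/-- the Jacobian determinant of the inverse partial hodograph map
`(t,ψ) ↦ (x,r)` equals `t(1-t²)rγ/(aγ_aF(W+Z))`, and in particular is nonzero for
`t > 0`, `r > 0`, `W + Z ≠ 0`, so the inverse map is a local diffeomorphism away from
the degenerate line `t = 0`. -/
theorem stmt_16 (t r γ a γa F θ : ℝ) (ht : t ∈ Set.Ioo (0:ℝ) 1) (hr : 0 < r)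
    (hγ : 0 < γ) (ha : 0 < a) (hγa : 0 < γa) (hF : 0 < F)
    (W Z L : ℝ) (hWZ : W + Z ≠ 0)
    (xt rt xψ rψ : ℝ)
    (hxt : xt = t * Real.sqrt (1 - t ^ 2) * r * Real.sin θ / (F * (W + Z)))
    (hrt : rt = -(t * Real.sqrt (1 - t ^ 2) * r * Real.cos θ) / (F * (W + Z)))
    (hxψ : xψ = Real.sqrt (1 - t ^ 2) * γ / (a * γa * (W + Z)) *
      ((W + Z) * Real.cos θ + 2 * Real.sqrt (1 - t ^ 2) * Real.sin θ * L))
    (hrψ : rψ = Real.sqrt (1 - t ^ 2) * γ / (a * γa * (W + Z)) *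
      ((W + Z) * Real.sin θ - 2 * Real.sqrt (1 - t ^ 2) * Real.cos θ * L)) :
    xt * rψ - xψ * rt = t * (1 - t ^ 2) * r * γ / (a * γa * F * (W + Z)) ∧
    xt * rψ - xψ * rt ≠ 0 := by
  obtain ⟨ht0, ht1⟩ := ht
  have ht2 : 0 < 1 - t ^ 2 := by nlinarith
  have hs : Real.sqrt (1 - t ^ 2) ^ 2 = 1 - t ^ 2 := Real.sq_sqrt ht2.le
  have htrig := Real.sin_sq_add_cos_sq θ
  have key : xt * rψ - xψ * rt = t * (1 - t ^ 2) * r * γ / (a * γa * F * (W + Z)) := by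
    -- The `L`-terms cancel; what is left is the right-hand side times `sin² θ + cos² θ`.
    calc xt * rψ - xψ * rt
        = t * Real.sqrt (1 - t ^ 2) ^ 2 * r * γ * (Real.sin θ ^ 2 + Real.cos θ ^ 2) /
            (a * γa * F * (W + Z)) := by
          subst hxt hrt hxψ hrψ
          -- Forget `√(1 - t²)` and `W + Z` so that `field_simp` treats them as atoms.
          generalize Real.sqrt (1 - t ^ 2) = s
          generalize W + Z = D at hWZ ⊢
          field_simp
          ring
      _ = t * (1 - t ^ 2) * r * γ / (a * γa * F * (W + Z)) := by
          rw [hs, htrig, mul_one]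
  refine ⟨key, ?_⟩
  rw [key]
  have hnum : t * (1 - t ^ 2) * r * γ ≠ 0 := by positivity
  have hden : a * γa * F * (W + Z) ≠ 0 := by positivity
  exact div_ne_zero hnum hden
end

section
/- Let ω ∈ (0, π/2), set ϖ = sin ω, and let θ ∈ ℝ, a, γ, γ_a, r, F̂₁ > 0 and W, Z, L ∈ ℝ. Define u = aγ_a cos θ/(γϖ), v = aγ_a sin θ/(γϖ), ϖ_x = −(F̂₁/(4a²r))·((W+Z) sin θ − 2ϖ cos θ·L) and ϖ_r = (F̂₁/(4a²r))·((W+Z) cos θ + 2ϖ sin θ·L). Then u·ϖ_r − v·ϖ_x = γ_a·F̂₁·(W+Z)/(4a·γ·r·ϖ). In particular, if W + Z > 0 then u·ϖ_r − v·ϖ_x > 0, i.e. (φ_x, φ_r)·(ϖ_r, −ϖ_x) > 0, so the potential φ is strictly increasing along each level curve of ϖ. -/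
/-- with `u = aγ_a cos θ/(γϖ)`, `v = aγ_a sin θ/(γϖ)` and the gradient
formulas for `ϖ`, one has `u·ϖ_r - v·ϖ_x = γ_a F̂₁ (W+Z)/(4aγrϖ)`; in particular, if
`W + Z > 0` then `u·ϖ_r - v·ϖ_x > 0`, so the potential `φ` is strictly increasing along
each level curve of `ϖ` (basis of the global injectivity of the hodograph map). -/
theorem stmt_18 (ω θ a γ γa r F₁ : ℝ) (hω : ω ∈ Set.Ioo 0 (Real.pi / 2))
    (ha : 0 < a) (hγ : 0 < γ) (hγa : 0 < γa) (hr : 0 < r) (hF₁ : 0 < F₁)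
    (W Z L : ℝ)
    (ϖ u v ϖx ϖr : ℝ) (hϖ : ϖ = Real.sin ω)
    (hu : u = a * γa * Real.cos θ / (γ * ϖ))
    (hv : v = a * γa * Real.sin θ / (γ * ϖ))
    (hϖx : ϖx = -(F₁ / (4 * a ^ 2 * r)) * ((W + Z) * Real.sin θ - 2 * ϖ * Real.cos θ * L))
    (hϖr : ϖr = F₁ / (4 * a ^ 2 * r) * ((W + Z) * Real.cos θ + 2 * ϖ * Real.sin θ * L)) :
    u * ϖr - v * ϖx = γa * F₁ * (W + Z) / (4 * a * γ * r * ϖ) ∧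
    (0 < W + Z → 0 < u * ϖr - v * ϖx) := by
  have hϖ0 : 0 < ϖ := hϖ ▸ Real.sin_pos_of_pos_of_lt_pi hω.1 (by linarith [hω.2, Real.pi_pos])
  have key : u * ϖr - v * ϖx = γa * F₁ * (W + Z) / (4 * a * γ * r * ϖ) := by
    -- The `L` terms cancel, and the rest is a multiple of `cos² θ + sin² θ`.
    have h : u * ϖr - v * ϖx = γa * F₁ * (W + Z) / (4 * a * γ * r * ϖ)
        * (Real.sin θ ^ 2 + Real.cos θ ^ 2) := by
      rw [hu, hv, hϖx, hϖr]
      field_simp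
      ring
    rw [h, Real.sin_sq_add_cos_sq, mul_one]
  refine ⟨key, fun hWZ => ?_⟩
  rw [key]
  positivity
end
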